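/- Let n ≥ 1, p ≥ 1 and s ≥ 1 be integers with n ≥ p + 4s + 2. Then the functions Z ↦ tr(Y(Z)^{−s}) and Z ↦ tr(Y(Z)^{−(s−1)}) are μ_{n,p}-integrable, and (1 − (p+1)·s/n)·E[tr(Y^{−s})] ≤ E[tr(Y^{−(s−1)})]. -/

import Mathlib

open MeasureTheory Matrix Filter

noncomputable section

/-- The law `μ_{n,p}` of an `n × p` matrix with independent standard Gaussian entries. -/
def gaussEnsemble (n p : ℕ) : Measure (Fin n → Fin p → ℝ) :=
  Measure.pi fun _ => Measure.pi fun _ => ProbabilityTheory.gaussianReal 0 1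

/-- `Y(Z) = (1/n) Zᵀ Z`, the Wishart matrix `W_p(n, I_p/n)` built from the Gaussian matrix `Z`. -/
def wishartOf {n p : ℕ} (Z : Fin n → Fin p → ℝ) : Matrix (Fin p) (Fin p) ℝ :=
  (n : ℝ)⁻¹ • ((Matrix.of Z)ᵀ * Matrix.of Z)

/-!
Put `R = (ZᵀZ + ε)⁻¹` with `ε > 0` and integrate the field `(tr R)^q • Z R^(k+1)` by parts against
the Gaussian law. Since `tr (ZᵀZ R^(j+1)) ≤ tr (R^j)` and
`tr (R^(a+b)) ≤ tr (R^a) tr (R^b) ≤ p tr (R^(a+b))`, the second inequality being Chebyshev's sum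
inequality for the eigenvalues of `R`, the divergence of the field is at least
`(n - (k+1)(p+1) - 2q) (tr R)^q tr (R^(k+1))`, whence
`(n - (k+1)(p+1) - 2q) E[(tr R)^q tr (R^(k+1))] ≤ E[(tr R)^q tr (R^k)]`.
The case `q = 0` is the recursion for the regularised moments. The case `k = 0` bounds
`E[(tr R)^q]` by `p^q` uniformly in `ε`; this makes `ZᵀZ` almost surely invertible, makes the
inverse moments finite by Fatou's lemma, and so lets `ε → 0` by dominated convergence.
-/

open ProbabilityTheory Topology
open scoped ENNReal NNReal

section SteinIdentity

/-- Integration by parts for `μ` in the direction `v`: `∫ φ f dμ = ∫ ∂ᵥf dμ`, where the score `φ`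
plays the role of `-∂ᵥ log` of the density of `μ`. -/
def SteinIdentity {E : Type*} [AddCommGroup E] [Module ℝ E] [MeasurableSpace E] (μ : Measure E)
    (v : E) (φ : E → ℝ) : Prop :=
  ∀ ⦃f f' : E → ℝ⦄, (∀ x, HasLineDerivAt ℝ f (f' x) x v) → Integrable f μ → Integrable f' μ →
    Integrable (fun x => φ x * f x) μ → ∫ x, φ x * f x ∂μ = ∫ x, f' x ∂μ

theorem hasDerivAt_gaussianPDFReal (m : ℝ) {v : ℝ≥0} (hv : v ≠ 0) (x : ℝ) :
    HasDerivAt (gaussianPDFReal m v) (-((x - m) / v) * gaussianPDFReal m v x) x := by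
  have hexponent : HasDerivAt (fun x : ℝ => -(x - m) ^ 2 / (2 * v)) (-((x - m) / v)) x := by
    refine ((((hasDerivAt_id x).sub_const m).pow 2).neg.div_const (2 * (v : ℝ))).congr_deriv ?_
    simp only [id]
    field_simp
    ring
  rw [gaussianPDFReal_def]
  exact (hexponent.exp.const_mul _).congr_deriv (by ring)

theorem integrable_gaussianReal_iff (m : ℝ) {v : ℝ≥0} (hv : v ≠ 0) (f : ℝ → ℝ) :
    Integrable f (gaussianReal m v) ↔ Integrable (fun x => f x * gaussianPDFReal m v x) := by
  rw [gaussianReal_of_var_ne_zero m hv,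
    integrable_withDensity_iff (measurable_gaussianPDF m v)
      (Eventually.of_forall fun _ => gaussianPDF_lt_top)]
  simp only [toReal_gaussianPDF]

theorem steinIdentity_gaussianReal (m : ℝ) {v : ℝ≥0} (hv : v ≠ 0) :
    SteinIdentity (gaussianReal m v) 1 fun x => (x - m) / v := by
  intro f f' hf hf_int hf'_int hφf_int
  rw [integrable_gaussianReal_iff m hv] at hf_int hf'_int hφf_int
  have hderiv (x : ℝ) : HasDerivAt f (f' x) x := by
    have h : HasDerivAt (fun t => f (x + t • 1)) (f' x) (x - x) := by
      simpa only [HasLineDerivAt, sub_self] using hf x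
    simpa using h.comp_sub_const x x
  have hparts := integral_mul_deriv_eq_deriv_mul_of_integrable (fun x _ => hderiv x)
    (fun x _ => hasDerivAt_gaussianPDFReal m hv x)
    (hφf_int.neg.congr (.of_forall fun x => by simp only [Pi.neg_apply, Pi.mul_apply]; ring))
    hf'_int hf_int
  simp only [integral_gaussianReal_eq_integral_smul hv, smul_eq_mul]
  calc ∫ x, gaussianPDFReal m v x * ((x - m) / v * f x)
      = -∫ x, f x * (-((x - m) / v) * gaussianPDFReal m v x) := by
        rw [← integral_neg]
        congr with x
        ring
    _ = ∫ x, gaussianPDFReal m v x * f' x := by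
        simp only [hparts, neg_neg, mul_comm]

variable {ι : Type*} [Fintype ι] [DecidableEq ι] {α : ι → Type*} [∀ i, MeasurableSpace (α i)]
  (μ : ∀ i, Measure (α i)) [∀ i, IsProbabilityMeasure (μ i)]

theorem measurePreserving_update (i : ι) :
    MeasurePreserving (fun q : (∀ i, α i) × α i => Function.update q.1 i q.2)
      ((Measure.pi μ).prod (μ i)) (Measure.pi μ) := by
  have hmeas : Measurable fun q : (∀ i, α i) × α i => Function.update q.1 i q.2 :=
    measurable_update'
  refine ⟨hmeas, (Measure.pi_eq fun s hs => ?_).symm⟩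
  have hpreimage : (fun q : (∀ i, α i) × α i => Function.update q.1 i q.2) ⁻¹' Set.univ.pi s =
      Set.univ.pi (Function.update s i Set.univ) ×ˢ s i := by
    ext ⟨x, y⟩
    simp only [Set.mem_preimage, Set.mem_univ_pi, Set.mem_prod]
    rw [Function.forall_update_iff x (p := fun k a => a ∈ s k),
      Function.forall_update_iff s (p := fun k t => x k ∈ t)]
    simp [and_comm]
  have hmass : (fun k => μ k (Function.update s i Set.univ k)) =
      Function.update (fun k => μ k (s k)) i 1 := by
    ext k
    rw [Function.apply_update fun k => μ k, measure_univ]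
  rw [Measure.map_apply hmeas (.univ_pi hs), hpreimage, Measure.prod_prod, Measure.pi_pi, hmass,
    Finset.prod_update_of_mem (Finset.mem_univ i), one_mul,
    ← Finset.prod_eq_prod_sdiff_singleton_mul (Finset.mem_univ i)]

variable {μ}

-- Resampling the `i`-th coordinate leaves the product measure invariant, so by Fubini it suffices
-- to integrate by parts in that coordinate.
theorem SteinIdentity.pi [∀ i, AddCommGroup (α i)] [∀ i, Module ℝ (α i)] {i : ι} {v : α i}
    {φ : α i → ℝ} (h : SteinIdentity (μ i) v φ) :
    SteinIdentity (Measure.pi μ) (Pi.single i v) fun x => φ (x i) := by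
  intro f f' hf hf_int hf'_int hφf_int
  have hresample := measurePreserving_update μ i
  have hfubini {g : (∀ i, α i) → ℝ} (hg : Integrable g (Measure.pi μ)) :
      ∫ x, g x ∂Measure.pi μ = ∫ x, ∫ y, g (Function.update x i y) ∂μ i ∂Measure.pi μ := by
    conv_lhs => rw [← hresample.map_eq]
    rw [integral_map hresample.measurable.aemeasurable
      (by simpa only [hresample.map_eq] using hg.1)]
    exact integral_prod _ (hresample.integrable_comp_of_integrable hg)
  have hfiber {g : (∀ i, α i) → ℝ} (hg : Integrable g (Measure.pi μ)) :
      ∀ᵐ x ∂Measure.pi μ, Integrable (fun y => g (Function.update x i y)) (μ i) :=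
    (hresample.integrable_comp_of_integrable hg).prod_right_ae
  rw [hfubini hφf_int, hfubini hf'_int]
  refine integral_congr_ae ?_
  filter_upwards [hfiber hf_int, hfiber hf'_int, hfiber hφf_int] with x hx hx' hxφ
  simp only [Function.update_self] at hxφ ⊢
  refine h (fun y => ?_) hx hx' hxφ
  have hline (t : ℝ) : Function.update x i y + t • Pi.single i v =
      Function.update x i (y + t • v) := by
    ext k
    rcases eq_or_ne k i with rfl | hk <;> simp [*]
  simpa only [HasLineDerivAt, hline] using hf (Function.update x i y)

end SteinIdentity

section Moments

/-- All moments of the random variable `X` under `μ` are finite. Unlike membership in a single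
`L^q`, this is stable under products. -/
def HasAllMoments {Ω : Type*} [MeasurableSpace Ω] (X : Ω → ℝ) (μ : Measure Ω) : Prop :=
  ∀ q : ℝ≥0, MemLp X q μ

namespace HasAllMoments

variable {Ω : Type*} [MeasurableSpace Ω] {μ : Measure Ω} {X Y : Ω → ℝ}

theorem integrable (hX : HasAllMoments X μ) : Integrable X μ :=
  memLp_one_iff_integrable.1 (hX 1)

theorem add (hX : HasAllMoments X μ) (hY : HasAllMoments Y μ) :
    HasAllMoments (fun ω => X ω + Y ω) μ :=
  fun q => (hX q).add (hY q)

theorem neg (hX : HasAllMoments X μ) : HasAllMoments (fun ω => -X ω) μ :=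
  fun q => (hX q).neg

theorem mul (hX : HasAllMoments X μ) (hY : HasAllMoments Y μ) :
    HasAllMoments (fun ω => X ω * Y ω) μ := by
  intro q
  have : ENNReal.HolderTriple (2 * q : ℝ≥0) (2 * q : ℝ≥0) q := ⟨by
    rw [ENNReal.coe_mul, ENNReal.coe_ofNat, ENNReal.mul_inv (.inl two_ne_zero) (.inl (by simp)),
      ← add_mul, ENNReal.inv_two_add_inv_two, one_mul]⟩
  exact (hY (2 * q)).mul' (hX (2 * q))

theorem sum {ι : Type*} {X : ι → Ω → ℝ} (s : Finset ι) (hX : ∀ i, HasAllMoments (X i) μ) :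
    HasAllMoments (fun ω => ∑ i ∈ s, X i ω) μ :=
  fun q => memLp_finsetSum s fun i _ => hX i q

variable [IsFiniteMeasure μ]

theorem const (c : ℝ) : HasAllMoments (fun _ : Ω => c) μ :=
  fun _ => memLp_const c

theorem pow (hX : HasAllMoments X μ) : ∀ k : ℕ, HasAllMoments (fun ω => X ω ^ k) μ
  | 0 => by simpa only [pow_zero] using const 1
  | k + 1 => by simpa only [pow_succ] using (hX.pow k).mul hX

end HasAllMoments

/-- All entries of the random matrix `A` have finite moments of all orders under `μ`. -/
def HasAllEntryMoments {Ω m n : Type*} [MeasurableSpace Ω] (A : Ω → Matrix m n ℝ)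
    (μ : Measure Ω) : Prop :=
  ∀ i j, HasAllMoments (fun ω => A ω i j) μ

namespace HasAllEntryMoments

variable {Ω l m n : Type*} [MeasurableSpace Ω] {μ : Measure Ω}

theorem transpose {A : Ω → Matrix m n ℝ} (hA : HasAllEntryMoments A μ) :
    HasAllEntryMoments (fun ω => (A ω)ᵀ) μ :=
  fun i j => hA j i

theorem add {A B : Ω → Matrix m n ℝ} (hA : HasAllEntryMoments A μ) (hB : HasAllEntryMoments B μ) :
    HasAllEntryMoments (fun ω => A ω + B ω) μ :=
  fun i j => (hA i j).add (hB i j)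

theorem neg {A : Ω → Matrix m n ℝ} (hA : HasAllEntryMoments A μ) :
    HasAllEntryMoments (fun ω => -A ω) μ :=
  fun i j => (hA i j).neg

theorem smul {X : Ω → ℝ} {A : Ω → Matrix m n ℝ} (hX : HasAllMoments X μ)
    (hA : HasAllEntryMoments A μ) : HasAllEntryMoments (fun ω => X ω • A ω) μ :=
  fun i j => hX.mul (hA i j)

theorem mul [Fintype m] {A : Ω → Matrix l m ℝ} {B : Ω → Matrix m n ℝ}
    (hA : HasAllEntryMoments A μ) (hB : HasAllEntryMoments B μ) :
    HasAllEntryMoments (fun ω => A ω * B ω) μ :=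
  fun i j => HasAllMoments.sum _ fun k => (hA i k).mul (hB k j)

theorem sum {ι : Type*} {A : ι → Ω → Matrix m n ℝ} (s : Finset ι)
    (hA : ∀ k, HasAllEntryMoments (A k) μ) : HasAllEntryMoments (fun ω => ∑ k ∈ s, A k ω) μ :=
  fun i j => by
    simpa only [Matrix.sum_apply] using HasAllMoments.sum s fun k => hA k i j

theorem trace [Fintype n] {A : Ω → Matrix n n ℝ} (hA : HasAllEntryMoments A μ) :
    HasAllMoments (fun ω => (A ω).trace) μ :=
  HasAllMoments.sum _ fun i => hA i i

variable [IsFiniteMeasure μ]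

theorem const (A : Matrix m n ℝ) : HasAllEntryMoments (fun _ : Ω => A) μ :=
  fun i j => .const (A i j)

theorem pow [Fintype n] [DecidableEq n] {A : Ω → Matrix n n ℝ} (hA : HasAllEntryMoments A μ) :
    ∀ k : ℕ, HasAllEntryMoments (fun ω => A ω ^ k) μ
  | 0 => by simpa only [pow_zero] using const 1
  | k + 1 => by simpa only [pow_succ] using (hA.pow k).mul hA

end HasAllEntryMoments

end Moments

section TracePowers

variable {n 𝕜 : Type*} [Fintype n] [DecidableEq n]

theorem trace_conjStarAlgAut [RCLike 𝕜] (U : unitaryGroup n 𝕜) (A : Matrix n n 𝕜) :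
    (Unitary.conjStarAlgAut 𝕜 _ U A).trace = A.trace := by
  rw [Unitary.conjStarAlgAut_apply, trace_mul_comm, ← mul_assoc, Unitary.coe_star_mul_self, one_mul]

theorem trace_pow_eq_sum_eigenvalues_pow [RCLike 𝕜] {A : Matrix n n 𝕜} (hA : A.IsHermitian)
    (k : ℕ) : (A ^ k).trace = ∑ i, (hA.eigenvalues i : 𝕜) ^ k := by
  conv_lhs => rw [hA.spectral_theorem]
  rw [← map_pow, trace_conjStarAlgAut, diagonal_pow, trace_diagonal]
  rfl

theorem trace_inv_add_smul_one_pow [RCLike 𝕜] {A : Matrix n n 𝕜} (hA : A.IsHermitian) {ε : 𝕜}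
    (hε : ∀ i, (hA.eigenvalues i : 𝕜) + ε ≠ 0) (k : ℕ) :
    ((A + ε • 1)⁻¹ ^ k).trace = ∑ i, ((hA.eigenvalues i + ε : 𝕜)⁻¹) ^ k := by
  set φ := Unitary.conjStarAlgAut 𝕜 _ hA.eigenvectorUnitary
  have hinv : (A + ε • 1)⁻¹ = φ (diagonal fun i => (hA.eigenvalues i + ε : 𝕜)⁻¹) := by
    refine inv_eq_right_inv ?_
    have hshift : A + ε • 1 = φ (diagonal fun i => (hA.eigenvalues i + ε : 𝕜)) := by
      conv_lhs => rw [hA.spectral_theorem, ← map_one φ, ← map_smul, ← map_add,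
        smul_one_eq_diagonal, diagonal_add]
      rfl
    rw [hshift, ← map_mul, diagonal_mul_diagonal]
    simp only [mul_inv_cancel₀ (hε _), diagonal_one, map_one]
  rw [hinv, ← map_pow, trace_conjStarAlgAut, diagonal_pow, trace_diagonal]
  rfl

theorem trace_pow_mul_trace_pow_le {A : Matrix n n ℝ} (hA : A.PosSemidef) (a b : ℕ) :
    (A ^ a).trace * (A ^ b).trace ≤ Fintype.card n * (A ^ (a + b)).trace := by
  simp only [trace_pow_eq_sum_eigenvalues_pow hA.1, RCLike.ofReal_real_eq_id, id]
  simp only [pow_add]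
  refine Monovary.sum_mul_sum_le_card_mul_sum fun i j hij => ?_
  exact pow_le_pow_left₀ (hA.eigenvalues_nonneg i)
    (lt_of_pow_lt_pow_left₀ b (hA.eigenvalues_nonneg j) hij).le a

theorem trace_pow_add_le {A : Matrix n n ℝ} (hA : A.PosSemidef) (a b : ℕ) :
    (A ^ (a + b)).trace ≤ (A ^ a).trace * (A ^ b).trace := by
  simp only [trace_pow_eq_sum_eigenvalues_pow hA.1, RCLike.ofReal_real_eq_id, id]
  simp only [pow_add, Finset.sum_mul]
  have hnonneg (k : ℕ) (i : n) : 0 ≤ hA.1.eigenvalues i ^ k :=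
    pow_nonneg (hA.eigenvalues_nonneg i) k
  gcongr with i
  · exact hnonneg a i
  · exact Finset.single_le_sum (fun j _ => hnonneg b j) (Finset.mem_univ i)

theorem trace_pow_succ_le_trace_pow {A : Matrix n n ℝ} (hA : A.PosSemidef) :
    ∀ k : ℕ, (A ^ (k + 1)).trace ≤ A.trace ^ (k + 1)
  | 0 => by simp only [zero_add, pow_one, le_refl]
  | k + 1 => calc
    (A ^ (k + 1 + 1)).trace ≤ (A ^ (k + 1)).trace * A.trace := by
      simpa only [pow_one] using trace_pow_add_le hA (k + 1) 1
    _ ≤ A.trace ^ (k + 1) * A.trace :=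
      mul_le_mul_of_nonneg_right (trace_pow_succ_le_trace_pow hA k) hA.trace_nonneg
    _ = A.trace ^ (k + 1 + 1) := (pow_succ _ _).symm

omit [DecidableEq n] in
theorem abs_apply_le_trace {A : Matrix n n ℝ} (hA : A.PosSemidef) (i j : n) :
    |A i j| ≤ A.trace := by
  classical
  have hsq : (A ^ 2).trace = ∑ k, ∑ l, A k l ^ 2 := by
    have hsymm (k l : n) : A l k = A k l := by simpa using hA.1.apply k l
    simp only [pow_two, trace, diag_apply, mul_apply, hsymm]
  refine abs_le_of_sq_le_sq ?_ hA.trace_nonneg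
  calc A i j ^ 2 ≤ ∑ l, A i l ^ 2 :=
      Finset.single_le_sum (fun l _ => sq_nonneg (A i l)) (Finset.mem_univ j)
    _ ≤ ∑ k, ∑ l, A k l ^ 2 :=
      Finset.single_le_sum (f := fun k => ∑ l, A k l ^ 2)
        (fun k _ => Finset.sum_nonneg fun l _ => sq_nonneg (A k l)) (Finset.mem_univ i)
    _ = (A ^ 2).trace := hsq.symm
    _ ≤ A.trace ^ 2 := trace_pow_succ_le_trace_pow hA 1

end TracePowers

section GramResolvent

variable {m n : Type*} [Fintype m]

theorem posSemidef_transpose_mul_self [Finite n] (Z : Matrix m n ℝ) : (Zᵀ * Z).PosSemidef := by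
  simpa only [conjTranspose_eq_transpose_of_trivial] using posSemidef_conjTranspose_mul_self Z

variable [Fintype n] [DecidableEq n]

/-- The resolvent `(ZᵀZ + ε)⁻¹` of the Gram matrix of `Z`, which for `ε > 0` is a bounded
regularisation of `(ZᵀZ)⁻¹`; for `ε = 0` it is `0` when `ZᵀZ` is singular. -/
def gramResolvent (ε : ℝ) (Z : Matrix m n ℝ) : Matrix n n ℝ :=
  (Zᵀ * Z + ε • 1)⁻¹

/-- The eigenvalues of `ZᵀZ`, i.e. the squared singular values of `Z`. -/
def gramEigenvalues (Z : Matrix m n ℝ) : n → ℝ :=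
  (posSemidef_transpose_mul_self Z).1.eigenvalues

theorem gramEigenvalues_nonneg (Z : Matrix m n ℝ) (i : n) : 0 ≤ gramEigenvalues Z i :=
  (posSemidef_transpose_mul_self Z).eigenvalues_nonneg i

theorem det_transpose_mul_self (Z : Matrix m n ℝ) : (Zᵀ * Z).det = ∏ i, gramEigenvalues Z i :=
  (posSemidef_transpose_mul_self Z).1.det_eq_prod_eigenvalues

theorem trace_gramResolvent_pow {ε : ℝ} {Z : Matrix m n ℝ}
    (hε : ∀ i, gramEigenvalues Z i + ε ≠ 0) (k : ℕ) :
    (gramResolvent ε Z ^ k).trace = ∑ i, (gramEigenvalues Z i + ε)⁻¹ ^ k :=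
  trace_inv_add_smul_one_pow (posSemidef_transpose_mul_self Z).1 hε k

theorem posSemidef_gramResolvent {ε : ℝ} (hε : 0 ≤ ε) (Z : Matrix m n ℝ) :
    (gramResolvent ε Z).PosSemidef :=
  ((posSemidef_transpose_mul_self Z).add (PosSemidef.one.smul hε)).inv

theorem trace_gramResolvent_nonneg {ε : ℝ} (hε : 0 ≤ ε) (Z : Matrix m n ℝ) :
    0 ≤ (gramResolvent ε Z).trace :=
  (posSemidef_gramResolvent hε Z).trace_nonneg

theorem trace_gramResolvent_pow_nonneg {ε : ℝ} (hε : 0 ≤ ε) (Z : Matrix m n ℝ) (k : ℕ) :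
    0 ≤ (gramResolvent ε Z ^ k).trace :=
  ((posSemidef_gramResolvent hε Z).pow k).trace_nonneg

theorem transpose_gramResolvent (ε : ℝ) (Z : Matrix m n ℝ) :
    (gramResolvent ε Z)ᵀ = gramResolvent ε Z := by
  simp only [gramResolvent, transpose_nonsing_inv, transpose_add, transpose_mul,
    transpose_transpose, transpose_smul, transpose_one]

theorem continuousAt_inv_of_isUnit {A : Matrix n n ℝ} (hA : IsUnit A) :
    ContinuousAt Inv.inv A := by
  refine continuousAt_matrix_inv A ?_
  rw [Ring.inverse_eq_inv']
  exact continuousAt_inv₀ ((isUnit_iff_isUnit_det A).1 hA).ne_zero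

section Nonsingular

variable {Z : Matrix m n ℝ} (hZ : (Zᵀ * Z).det ≠ 0)
include hZ

theorem gramEigenvalues_pos (i : n) : 0 < gramEigenvalues Z i := by
  rw [det_transpose_mul_self] at hZ
  exact (gramEigenvalues_nonneg Z i).lt_of_ne' (Finset.prod_ne_zero_iff.1 hZ i (Finset.mem_univ i))

theorem trace_gramResolvent_pow_le {ε : ℝ} (hε : 0 ≤ ε) (k : ℕ) :
    (gramResolvent ε Z ^ k).trace ≤ (gramResolvent 0 Z ^ k).trace := by
  have hpos := gramEigenvalues_pos hZ
  rw [trace_gramResolvent_pow fun i => (add_pos_of_pos_of_nonneg (hpos i) hε).ne',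
    trace_gramResolvent_pow fun i => (add_pos_of_pos_of_nonneg (hpos i) le_rfl).ne']
  gcongr with i
  · exact inv_nonneg.2 (add_nonneg (hpos i).le hε)
  · rw [add_zero]
    exact hpos i

theorem tendsto_trace_gramResolvent_pow (k : ℕ) :
    Tendsto (fun ε => (gramResolvent ε Z ^ k).trace) (𝓝 0) (𝓝 (gramResolvent 0 Z ^ k).trace) := by
  have hgram : IsUnit (Zᵀ * Z + (0 : ℝ) • 1) := by
    simpa only [zero_smul, add_zero] using (isUnit_iff_isUnit_det _).2 hZ.isUnit
  have hresolvent : ContinuousAt (fun ε => gramResolvent ε Z) (0 : ℝ) :=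
    ContinuousAt.comp (f := fun ε : ℝ => Zᵀ * Z + ε • 1) (continuousAt_inv_of_isUnit hgram)
      (by fun_prop)
  exact (continuous_id.matrix_trace.tendsto _).comp (hresolvent.pow k)

end Nonsingular

variable {ε : ℝ} (hε : 0 < ε)
include hε

theorem isUnit_transpose_mul_self_add_smul_one (Z : Matrix m n ℝ) : IsUnit (Zᵀ * Z + ε • 1) :=
  (PosDef.posSemidef_add (posSemidef_transpose_mul_self Z) (PosDef.one.smul hε)).isUnit

theorem continuous_gramResolvent : Continuous (gramResolvent ε : Matrix m n ℝ → Matrix n n ℝ) :=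
  continuous_iff_continuousAt.2 fun Z =>
    ContinuousAt.comp (f := fun Z : Matrix m n ℝ => Zᵀ * Z + ε • 1)
      (continuousAt_inv_of_isUnit (isUnit_transpose_mul_self_add_smul_one hε Z))
      (by fun_prop)

theorem transpose_mul_self_mul_gramResolvent (Z : Matrix m n ℝ) :
    Zᵀ * Z * gramResolvent ε Z = 1 - ε • gramResolvent ε Z := by
  have hinv : (Zᵀ * Z + ε • 1) * gramResolvent ε Z = 1 :=
    mul_nonsing_inv _ ((isUnit_iff_isUnit_det _).1 (isUnit_transpose_mul_self_add_smul_one hε Z))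
  rw [eq_sub_iff_add_eq, ← hinv, add_mul, smul_mul, one_mul]

theorem trace_transpose_mul_self_mul_gramResolvent_pow_le (Z : Matrix m n ℝ) (k : ℕ) :
    (Zᵀ * Z * gramResolvent ε Z ^ (k + 1)).trace ≤ (gramResolvent ε Z ^ k).trace := by
  rw [pow_succ', ← mul_assoc, transpose_mul_self_mul_gramResolvent hε, sub_mul, one_mul, smul_mul,
    ← pow_succ', trace_sub, trace_smul, smul_eq_mul]
  exact sub_le_self _ (mul_nonneg hε.le (trace_gramResolvent_pow_nonneg hε.le Z _))

theorem trace_gramResolvent (Z : Matrix m n ℝ) :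
    (gramResolvent ε Z).trace = ∑ i, (gramEigenvalues Z i + ε)⁻¹ := by
  simpa only [pow_one] using trace_gramResolvent_pow
    (fun i => (add_pos_of_nonneg_of_pos (gramEigenvalues_nonneg Z i) hε).ne') 1

theorem trace_gramResolvent_le (Z : Matrix m n ℝ) :
    (gramResolvent ε Z).trace ≤ Fintype.card n * ε⁻¹ := by
  rw [trace_gramResolvent hε, ← nsmul_eq_mul]
  refine Finset.sum_le_card_nsmul _ _ _ fun i _ => ?_
  exact inv_anti₀ hε (le_add_of_nonneg_left (gramEigenvalues_nonneg Z i))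

theorem inv_le_trace_gramResolvent {Z : Matrix m n ℝ} (hZ : (Zᵀ * Z).det = 0) :
    ε⁻¹ ≤ (gramResolvent ε Z).trace := by
  rw [det_transpose_mul_self] at hZ
  obtain ⟨i, -, hi⟩ := Finset.prod_eq_zero_iff.1 hZ
  rw [trace_gramResolvent hε]
  calc ε⁻¹ = (gramEigenvalues Z i + ε)⁻¹ := by rw [hi, zero_add]
    _ ≤ ∑ j, (gramEigenvalues Z j + ε)⁻¹ :=
      Finset.single_le_sum (f := fun j => (gramEigenvalues Z j + ε)⁻¹)
        (fun j _ => inv_nonneg.2 (add_nonneg (gramEigenvalues_nonneg Z j) hε.le))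
        (Finset.mem_univ i)

end GramResolvent

section MatrixCalculus

variable {𝕜 : Type*} [NontriviallyNormedField 𝕜] {l m n : Type*} {t : 𝕜}

theorem hasDerivAt_matrix [Finite m] [Finite n] {A : 𝕜 → Matrix m n 𝕜} {A' : Matrix m n 𝕜} :
    HasDerivAt A A' t ↔ ∀ i j, HasDerivAt (fun t => A t i j) (A' i j) t := by
  cases nonempty_fintype m
  cases nonempty_fintype n
  exact hasDerivAt_pi.trans (forall_congr' fun _ => hasDerivAt_pi)

theorem hasDerivAt_matrix_mul [Finite l] [Fintype m] [Finite n] {A : 𝕜 → Matrix l m 𝕜}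
    {A' : Matrix l m 𝕜} {B : 𝕜 → Matrix m n 𝕜} {B' : Matrix m n 𝕜}
    (hA : HasDerivAt A A' t) (hB : HasDerivAt B B' t) :
    HasDerivAt (fun t => A t * B t) (A' * B t + A t * B') t := by
  rw [hasDerivAt_matrix] at hA hB ⊢
  intro i j
  simp only [mul_apply, Matrix.add_apply, ← Finset.sum_add_distrib]
  exact HasDerivAt.fun_sum fun k _ => (hA i k).fun_mul (hB k j)

theorem hasDerivAt_matrix_transpose [Finite m] [Finite n] {A : 𝕜 → Matrix m n 𝕜}
    {A' : Matrix m n 𝕜} (hA : HasDerivAt A A' t) : HasDerivAt (fun t => (A t)ᵀ) A'ᵀ t :=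
  hasDerivAt_matrix.2 fun i j => hasDerivAt_matrix.1 hA j i

theorem hasDerivAt_matrix_trace [Fintype n] {A : 𝕜 → Matrix n n 𝕜} {A' : Matrix n n 𝕜}
    (hA : HasDerivAt A A' t) : HasDerivAt (fun t => (A t).trace) A'.trace t :=
  HasDerivAt.fun_sum fun i _ => hasDerivAt_matrix.1 hA i i

theorem hasDerivAt_matrix_smul [Finite m] [Finite n] {c : 𝕜 → 𝕜} {c' : 𝕜}
    {A : 𝕜 → Matrix m n 𝕜} {A' : Matrix m n 𝕜} (hc : HasDerivAt c c' t) (hA : HasDerivAt A A' t) :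
    HasDerivAt (fun t => c t • A t) (c' • A t + c t • A') t :=
  hasDerivAt_matrix.2 fun i j => hc.fun_mul (hasDerivAt_matrix.1 hA i j)

theorem hasDerivAt_add_smul_matrix [Finite m] [Finite n] (A H : Matrix m n 𝕜) :
    HasDerivAt (fun t => A + t • H) H t :=
  hasDerivAt_matrix.2 fun i j =>
    (((hasDerivAt_id t).mul_const (H i j)).const_add (A i j)).congr_deriv (one_mul _)

open scoped Matrix.Norms.Operator in
theorem hasDerivAt_matrix_inv [Fintype n] [DecidableEq n] {A : ℝ → Matrix n n ℝ}
    {A' : Matrix n n ℝ} {t : ℝ} (hA : HasDerivAt A A' t) (hunit : IsUnit (A t)) :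
    HasDerivAt (fun t => (A t)⁻¹) (-((A t)⁻¹ * A' * (A t)⁻¹)) t := by
  have h := (hasFDerivAt_ringInverse (𝕜 := ℝ) hunit.unit).comp_hasDerivAt_of_eq t hA
    hunit.unit_spec
  simp only [nonsing_inv_eq_ringInverse]
  simpa [Ring.inverse_of_isUnit hunit] using! h

open scoped Matrix.Norms.Operator in
theorem hasDerivAt_matrix_pow [Fintype n] [DecidableEq n] {A : 𝕜 → Matrix n n 𝕜}
    {A' : Matrix n n 𝕜} (hA : HasDerivAt A A' t) (k : ℕ) :
    HasDerivAt (fun t => A t ^ (k + 1))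
      (∑ i ∈ Finset.range (k + 1), A t ^ (k - i) * A' * A t ^ i) t :=
  hA.fun_pow' (k + 1)

end MatrixCalculus

section CoordTrace

variable {m n : Type*} [Fintype m] [Fintype n] [DecidableEq m] [DecidableEq n]

/-- The trace of an endomorphism `L` of the space of matrices, computed in the basis of matrix
units. For the derivative of a matrix field it is the divergence of the field. -/
def coordTrace (L : Matrix m n ℝ → Matrix m n ℝ) : ℝ :=
  ∑ i, ∑ j, L (single i j 1) i j

theorem coordTrace_add (L M : Matrix m n ℝ → Matrix m n ℝ) :
    coordTrace (fun H => L H + M H) = coordTrace L + coordTrace M := by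
  simp only [coordTrace, Matrix.add_apply, Finset.sum_add_distrib]

theorem coordTrace_neg (L : Matrix m n ℝ → Matrix m n ℝ) :
    coordTrace (fun H => -L H) = -coordTrace L := by
  simp only [coordTrace, Matrix.neg_apply, Finset.sum_neg_distrib]

theorem coordTrace_smul (c : ℝ) (L : Matrix m n ℝ → Matrix m n ℝ) :
    coordTrace (fun H => c • L H) = c * coordTrace L := by
  simp only [coordTrace, Matrix.smul_apply, smul_eq_mul, Finset.mul_sum]

theorem coordTrace_sum {ι : Type*} (s : Finset ι) (L : ι → Matrix m n ℝ → Matrix m n ℝ) :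
    coordTrace (fun H => ∑ k ∈ s, L k H) = ∑ k ∈ s, coordTrace (L k) := by
  simp only [coordTrace, Matrix.sum_apply, Finset.sum_comm (t := s)]

theorem coordTrace_mul_mul (A : Matrix m m ℝ) (B : Matrix n n ℝ) :
    coordTrace (fun H : Matrix m n ℝ => A * H * B) = A.trace * B.trace := by
  simp only [coordTrace, trace, diag_apply, Finset.sum_mul_sum]
  congr! with i _ j
  simp [mul_apply, single, ite_and]

theorem coordTrace_mul_transpose_mul (A B : Matrix m n ℝ) :
    coordTrace (fun H : Matrix m n ℝ => A * Hᵀ * B) = (Aᵀ * B).trace := by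
  rw [trace, coordTrace, Finset.sum_comm]
  simp only [diag_apply, mul_apply, transpose_apply]
  congr! with i _ j
  simp [single, ite_and]

theorem coordTrace_trace_mul_smul (C : Matrix n m ℝ) (D : Matrix m n ℝ) :
    coordTrace (fun H : Matrix m n ℝ => (C * H).trace • D) = (C * D).trace := by
  simp only [coordTrace, trace_mul_single, Matrix.smul_apply]
  rw [Finset.sum_comm]
  simp [trace, mul_apply]

end CoordTrace

section ResolventField

variable {m n : Type*} [Fintype m] [Fintype n] [DecidableEq n]

/-- The derivative of `gramResolvent ε` at `Z` in the direction `H`. -/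
def gramResolventDeriv (ε : ℝ) (Z H : Matrix m n ℝ) : Matrix n n ℝ :=
  -(gramResolvent ε Z * (Hᵀ * Z + Zᵀ * H) * gramResolvent ε Z)

theorem trace_gramResolventDeriv (ε : ℝ) (Z H : Matrix m n ℝ) :
    (gramResolventDeriv ε Z H).trace =
      -2 * (gramResolvent ε Z ^ 2 * Zᵀ * H).trace := by
  set R := gramResolvent ε Z
  have hflip : (R ^ 2 * (Hᵀ * Z)).trace = (R ^ 2 * (Zᵀ * H)).trace := by
    rw [← trace_transpose, transpose_mul, transpose_mul, transpose_transpose, transpose_pow,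
      transpose_gramResolvent, trace_mul_comm]
  rw [gramResolventDeriv, trace_neg, trace_mul_comm, ← Matrix.mul_assoc, ← pow_two, mul_add,
    trace_add, hflip, Matrix.mul_assoc]
  ring

open scoped Matrix.Norms.Operator in
theorem hasDerivAt_gramResolvent {ε : ℝ} (hε : 0 < ε) (Z H : Matrix m n ℝ) :
    HasDerivAt (fun t : ℝ => gramResolvent ε (Z + t • H)) (gramResolventDeriv ε Z H) 0 := by
  have hline : HasDerivAt (fun t : ℝ => Z + t • H) H 0 := hasDerivAt_add_smul_matrix Z H
  have hgram := (hasDerivAt_matrix_mul (hasDerivAt_matrix_transpose hline) hline).add_const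
    (ε • (1 : Matrix n n ℝ))
  simpa only [gramResolvent, gramResolventDeriv, zero_smul, add_zero] using
    hasDerivAt_matrix_inv hgram (isUnit_transpose_mul_self_add_smul_one hε _)

/-- The matrix field `(tr R)^q • Z R^(k+1)`, with `R = gramResolvent ε Z`, to which Stein's
identity is applied. -/
def resolventField (ε : ℝ) (q k : ℕ) (Z : Matrix m n ℝ) : Matrix m n ℝ :=
  (gramResolvent ε Z).trace ^ q • (Z * gramResolvent ε Z ^ (k + 1))

/-- The derivative of `Z ↦ Z * gramResolvent ε Z ^ (k + 1)` at `Z` in the direction `H`. -/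
def mulResolventPowDeriv (ε : ℝ) (k : ℕ) (Z H : Matrix m n ℝ) : Matrix m n ℝ :=
  H * gramResolvent ε Z ^ (k + 1) +
    Z * ∑ i ∈ Finset.range (k + 1),
      gramResolvent ε Z ^ (k - i) * gramResolventDeriv ε Z H * gramResolvent ε Z ^ i

/-- The derivative of `resolventField ε q k` at `Z` in the direction `H`. -/
def resolventFieldDeriv (ε : ℝ) (q k : ℕ) (Z H : Matrix m n ℝ) : Matrix m n ℝ :=
  (q * (gramResolvent ε Z).trace ^ (q - 1) * (gramResolventDeriv ε Z H).trace) •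
      (Z * gramResolvent ε Z ^ (k + 1)) +
    (gramResolvent ε Z).trace ^ q • mulResolventPowDeriv ε k Z H

theorem hasDerivAt_resolventField {ε : ℝ} (hε : 0 < ε) (q k : ℕ) (Z H : Matrix m n ℝ) :
    HasDerivAt (fun t : ℝ => resolventField ε q k (Z + t • H)) (resolventFieldDeriv ε q k Z H)
      0 := by
  have hline : HasDerivAt (fun t : ℝ => Z + t • H) H 0 := hasDerivAt_add_smul_matrix Z H
  have hR := hasDerivAt_gramResolvent hε Z H
  have htrace := (hasDerivAt_matrix_trace hR).fun_pow q
  have hmul := hasDerivAt_matrix_mul hline (hasDerivAt_matrix_pow hR k)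
  simpa only [resolventField, resolventFieldDeriv, mulResolventPowDeriv, zero_smul, add_zero] using
    hasDerivAt_matrix_smul htrace hmul

variable [DecidableEq m]

theorem coordTrace_mul_gramResolventDeriv (ε : ℝ) (Z : Matrix m n ℝ) (a b : ℕ) :
    coordTrace (fun H => Z *
        (gramResolvent ε Z ^ a * gramResolventDeriv ε Z H * gramResolvent ε Z ^ b)) =
      -((Zᵀ * Z * gramResolvent ε Z ^ (a + b + 2)).trace +
        (Zᵀ * Z * gramResolvent ε Z ^ (a + 1)).trace * (gramResolvent ε Z ^ (b + 1)).trace) := by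
  set R := gramResolvent ε Z with hR
  have hexpand (H : Matrix m n ℝ) : Z * (R ^ a * gramResolventDeriv ε Z H * R ^ b) =
      -(Z * R ^ (a + 1) * Hᵀ * (Z * R ^ (b + 1)) +
        Z * R ^ (a + 1) * Zᵀ * H * R ^ (b + 1)) := by
    simp only [gramResolventDeriv, ← hR, pow_succ R a, pow_succ' R b]
    simp only [Matrix.mul_neg, Matrix.neg_mul, Matrix.mul_add, Matrix.add_mul, Matrix.mul_assoc]
  have htranspose : ((Z * R ^ (a + 1))ᵀ * (Z * R ^ (b + 1))).trace =
      (Zᵀ * Z * R ^ (a + b + 2)).trace := by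
    rw [transpose_mul, transpose_pow, transpose_gramResolvent, ← hR, Matrix.mul_assoc,
      trace_mul_comm, Matrix.mul_assoc, Matrix.mul_assoc, ← pow_add, ← Matrix.mul_assoc]
    ring_nf
  simp only [hexpand]
  rw [coordTrace_neg, coordTrace_add, coordTrace_mul_transpose_mul, coordTrace_mul_mul, htranspose,
    Matrix.mul_assoc Z, trace_mul_comm Z, Matrix.mul_assoc (R ^ _), trace_mul_comm (R ^ _)]

theorem coordTrace_mulResolventPowDeriv (ε : ℝ) (k : ℕ) (Z : Matrix m n ℝ) :
    coordTrace (mulResolventPowDeriv ε k Z) =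
      Fintype.card m * (gramResolvent ε Z ^ (k + 1)).trace -
        ∑ i ∈ Finset.range (k + 1), ((Zᵀ * Z * gramResolvent ε Z ^ (k + 2)).trace +
          (Zᵀ * Z * gramResolvent ε Z ^ (k - i + 1)).trace *
            (gramResolvent ε Z ^ (i + 1)).trace) := by
  have hleft : coordTrace (fun H : Matrix m n ℝ => H * gramResolvent ε Z ^ (k + 1)) =
      Fintype.card m * (gramResolvent ε Z ^ (k + 1)).trace := by
    simpa only [Matrix.one_mul, trace_one] using
      coordTrace_mul_mul (1 : Matrix m m ℝ) (gramResolvent ε Z ^ (k + 1))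
  have hsum : mulResolventPowDeriv ε k Z = fun H => H * gramResolvent ε Z ^ (k + 1) +
      ∑ i ∈ Finset.range (k + 1), Z *
        (gramResolvent ε Z ^ (k - i) * gramResolventDeriv ε Z H * gramResolvent ε Z ^ i) := by
    funext H
    rw [mulResolventPowDeriv, Matrix.mul_sum]
  rw [hsum, coordTrace_add, coordTrace_sum, hleft, sub_eq_add_neg, ← Finset.sum_neg_distrib]
  refine congrArg _ (Finset.sum_congr rfl fun i hi => ?_)
  rw [coordTrace_mul_gramResolventDeriv,
    Nat.sub_add_cancel (Nat.lt_succ_iff.1 (Finset.mem_range.1 hi))]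

theorem coordTrace_resolventFieldDeriv (ε : ℝ) (q k : ℕ) (Z : Matrix m n ℝ) :
    coordTrace (resolventFieldDeriv ε q k Z) =
      (gramResolvent ε Z).trace ^ q * coordTrace (mulResolventPowDeriv ε k Z) -
        2 * q * ((gramResolvent ε Z).trace ^ (q - 1) *
          (Zᵀ * Z * gramResolvent ε Z ^ (k + 3)).trace) := by
  set R := gramResolvent ε Z with hR
  have hscalar : resolventFieldDeriv ε q k Z = fun H =>
      (-2 * q * R.trace ^ (q - 1)) • ((R ^ 2 * Zᵀ * H).trace • (Z * R ^ (k + 1))) +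
        R.trace ^ q • mulResolventPowDeriv ε k Z H := by
    funext H
    rw [resolventFieldDeriv, trace_gramResolventDeriv, smul_smul, ← hR]
    ring_nf
  have htrace : (R ^ 2 * Zᵀ * (Z * R ^ (k + 1))).trace = (Zᵀ * Z * R ^ (k + 3)).trace := by
    rw [Matrix.mul_assoc, trace_mul_comm, Matrix.mul_assoc, Matrix.mul_assoc, Matrix.mul_assoc,
      ← pow_add, ← Matrix.mul_assoc]
  rw [hscalar, coordTrace_add, coordTrace_smul, coordTrace_smul, coordTrace_trace_mul_smul, htrace]
  ring

theorem le_coordTrace_mulResolventPowDeriv {ε : ℝ} (hε : 0 < ε) (k : ℕ) (Z : Matrix m n ℝ) :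
    (Fintype.card m - (k + 1) * (Fintype.card n + 1)) * (gramResolvent ε Z ^ (k + 1)).trace ≤
      coordTrace (mulResolventPowDeriv ε k Z) := by
  have hterm {i : ℕ} (hi : i ∈ Finset.range (k + 1)) :
      (Zᵀ * Z * gramResolvent ε Z ^ (k + 2)).trace +
        (Zᵀ * Z * gramResolvent ε Z ^ (k - i + 1)).trace * (gramResolvent ε Z ^ (i + 1)).trace ≤
      (Fintype.card n + 1) * (gramResolvent ε Z ^ (k + 1)).trace := by
    have hpow : k - i + (i + 1) = k + 1 := by
      have := Finset.mem_range.1 hi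
      omega
    calc (Zᵀ * Z * gramResolvent ε Z ^ (k + 2)).trace +
          (Zᵀ * Z * gramResolvent ε Z ^ (k - i + 1)).trace * (gramResolvent ε Z ^ (i + 1)).trace
        ≤ (gramResolvent ε Z ^ (k + 1)).trace +
          (gramResolvent ε Z ^ (k - i)).trace * (gramResolvent ε Z ^ (i + 1)).trace := by
          gcongr
          · exact trace_transpose_mul_self_mul_gramResolvent_pow_le hε Z (k + 1)
          · exact trace_gramResolvent_pow_nonneg hε.le Z _
          · exact trace_transpose_mul_self_mul_gramResolvent_pow_le hε Z (k - i)
      _ ≤ (gramResolvent ε Z ^ (k + 1)).trace +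
          Fintype.card n * (gramResolvent ε Z ^ (k + 1)).trace := by
          rw [← hpow]
          exact add_le_add_right
            (trace_pow_mul_trace_pow_le (posSemidef_gramResolvent hε.le Z) _ _) _
      _ = (Fintype.card n + 1) * (gramResolvent ε Z ^ (k + 1)).trace := by ring
  rw [coordTrace_mulResolventPowDeriv]
  have hsum := Finset.sum_le_card_nsmul _ _ _ fun i hi => hterm (i := i) hi
  rw [Finset.card_range, nsmul_eq_mul, Nat.cast_succ] at hsum
  linarith

theorem le_coordTrace_resolventFieldDeriv {ε : ℝ} (hε : 0 < ε) (q k : ℕ) (Z : Matrix m n ℝ) :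
    (Fintype.card m - (k + 1) * (Fintype.card n + 1) - 2 * q) *
        ((gramResolvent ε Z).trace ^ q * (gramResolvent ε Z ^ (k + 1)).trace) ≤
      coordTrace (resolventFieldDeriv ε q k Z) := by
  have hT := trace_gramResolvent_nonneg hε.le Z
  have hpow := mul_le_mul_of_nonneg_left (le_coordTrace_mulResolventPowDeriv hε k Z)
    (pow_nonneg hT q)
  have hscalar : q * ((gramResolvent ε Z).trace ^ (q - 1) *
        (Zᵀ * Z * gramResolvent ε Z ^ (k + 3)).trace) ≤
      q * ((gramResolvent ε Z).trace ^ q * (gramResolvent ε Z ^ (k + 1)).trace) := by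
    rcases q with - | q
    · simp only [Nat.cast_zero, zero_mul, le_refl]
    have hle : (Zᵀ * Z * gramResolvent ε Z ^ (k + 3)).trace ≤
        (gramResolvent ε Z).trace * (gramResolvent ε Z ^ (k + 1)).trace := by
      calc (Zᵀ * Z * gramResolvent ε Z ^ (k + 3)).trace
          ≤ (gramResolvent ε Z ^ (1 + (k + 1))).trace := by
            rw [add_comm 1]
            exact trace_transpose_mul_self_mul_gramResolvent_pow_le hε Z (k + 2)
        _ ≤ (gramResolvent ε Z).trace * (gramResolvent ε Z ^ (k + 1)).trace := by
            simpa only [pow_one] using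
              trace_pow_add_le (posSemidef_gramResolvent hε.le Z) 1 (k + 1)
    rw [Nat.add_sub_cancel, pow_succ (gramResolvent ε Z).trace, mul_assoc (_ ^ q)]
    gcongr
  rw [coordTrace_resolventFieldDeriv]
  linarith

end ResolventField

section GaussianEnsemble

variable {n p : ℕ}

instance : IsProbabilityMeasure (gaussEnsemble n p) := by
  unfold gaussEnsemble
  infer_instance

theorem hasAllEntryMoments_of : HasAllEntryMoments (fun Z => of Z) (gaussEnsemble n p) :=
  fun i j q => by
    have heval : MeasurePreserving (fun Z : Fin n → Fin p → ℝ => Z i j) (gaussEnsemble n p)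
        (gaussianReal 0 1) :=
      (measurePreserving_eval (fun _ : Fin p => gaussianReal 0 1) j).comp
        (measurePreserving_eval (fun _ : Fin n => Measure.pi fun _ => gaussianReal 0 1) i)
    exact (memLp_id_gaussianReal q).comp_measurePreserving heval

theorem steinIdentity_gaussEnsemble (i : Fin n) (j : Fin p) :
    SteinIdentity (gaussEnsemble n p) (Pi.single i (Pi.single j 1)) fun Z => Z i j := by
  have hstandard : SteinIdentity (gaussianReal 0 1) 1 fun x => x := by
    simpa only [sub_zero, NNReal.coe_one, div_one] using steinIdentity_gaussianReal 0 one_ne_zero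
  exact (hstandard.pi (μ := fun _ : Fin p => gaussianReal 0 1) (i := j)).pi
    (μ := fun _ : Fin n => Measure.pi fun _ : Fin p => gaussianReal 0 1) (i := i)

theorem integral_trace_transpose_mul {F : Matrix (Fin n) (Fin p) ℝ → Matrix (Fin n) (Fin p) ℝ}
    {F' : Matrix (Fin n) (Fin p) ℝ → Matrix (Fin n) (Fin p) ℝ → Matrix (Fin n) (Fin p) ℝ}
    (hF : ∀ Z H, HasDerivAt (fun t : ℝ => F (Z + t • H)) (F' Z H) 0)
    (hFmom : HasAllEntryMoments (fun Z => F (of Z)) (gaussEnsemble n p))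
    (hF'mom : ∀ H, HasAllEntryMoments (fun Z => F' (of Z) H) (gaussEnsemble n p)) :
    ∫ Z, ((of Z)ᵀ * F (of Z)).trace ∂gaussEnsemble n p =
      ∫ Z, coordTrace (F' (of Z)) ∂gaussEnsemble n p := by
  have hleft (i : Fin n) (j : Fin p) :
      Integrable (fun Z => Z i j * F (of Z) i j) (gaussEnsemble n p) :=
    ((hasAllEntryMoments_of i j).mul (hFmom i j)).integrable
  have hright (i : Fin n) (j : Fin p) :
      Integrable (fun Z => F' (of Z) (single i j 1) i j) (gaussEnsemble n p) :=
    (hF'mom _ i j).integrable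
  have hentry (i : Fin n) (j : Fin p) : ∫ Z, Z i j * F (of Z) i j ∂gaussEnsemble n p =
      ∫ Z, F' (of Z) (single i j 1) i j ∂gaussEnsemble n p := by
    refine steinIdentity_gaussEnsemble i j (fun Z => ?_) (hFmom i j).integrable (hright i j)
      (hleft i j)
    rw [single_eq_of_single_single]
    exact hasDerivAt_matrix.1 (hF (of Z) _) i j
  have htrace (Z : Fin n → Fin p → ℝ) :
      ((of Z)ᵀ * F (of Z)).trace = ∑ i, ∑ j, Z i j * F (of Z) i j := by
    rw [Finset.sum_comm]
    rfl
  simp only [htrace, coordTrace, integral_finsetSum _ fun i _ => integrable_finsetSum _ fun j _ =>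
    hleft i j, integral_finsetSum _ fun i _ => integrable_finsetSum _ fun j _ => hright i j,
    integral_finsetSum _ fun j _ => hleft _ j, integral_finsetSum _ fun j _ => hright _ j, hentry]

section Resolvent

variable {ε : ℝ} (hε : 0 < ε)
include hε

theorem hasAllEntryMoments_gramResolvent :
    HasAllEntryMoments (fun Z => gramResolvent ε (of Z)) (gaussEnsemble n p) := by
  intro i j q
  have hcont : Continuous fun Z : Fin n → Fin p → ℝ => gramResolvent ε (of Z) i j :=
    ((continuous_gramResolvent hε).comp continuous_id).matrix_elem i j
  refine .of_bound hcont.aestronglyMeasurable (Fintype.card (Fin p) * ε⁻¹) (.of_forall fun Z => ?_)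
  exact (abs_apply_le_trace (posSemidef_gramResolvent hε.le _) i j).trans
    (trace_gramResolvent_le hε _)

theorem hasAllMoments_trace_pow_mul_trace_pow (q k : ℕ) :
    HasAllMoments (fun Z => (gramResolvent ε (of Z)).trace ^ q * (gramResolvent ε (of Z) ^ k).trace)
      (gaussEnsemble n p) :=
  ((hasAllEntryMoments_gramResolvent hε).trace.pow q).mul
    ((hasAllEntryMoments_gramResolvent hε).pow k).trace

theorem hasAllEntryMoments_resolventField (q k : ℕ) :
    HasAllEntryMoments (fun Z => resolventField ε q k (of Z)) (gaussEnsemble n p) :=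
  .smul ((hasAllEntryMoments_gramResolvent hε).trace.pow q)
    (hasAllEntryMoments_of.mul ((hasAllEntryMoments_gramResolvent hε).pow (k + 1)))

theorem hasAllEntryMoments_gramResolventDeriv (H : Matrix (Fin n) (Fin p) ℝ) :
    HasAllEntryMoments (fun Z => gramResolventDeriv ε (of Z) H) (gaussEnsemble n p) :=
  have hR := hasAllEntryMoments_gramResolvent hε
  ((hR.mul (((HasAllEntryMoments.const Hᵀ).mul hasAllEntryMoments_of).add
    (hasAllEntryMoments_of.transpose.mul (.const H)))).mul hR).neg

theorem hasAllEntryMoments_resolventFieldDeriv (q k : ℕ) (H : Matrix (Fin n) (Fin p) ℝ) :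
    HasAllEntryMoments (fun Z => resolventFieldDeriv ε q k (of Z) H) (gaussEnsemble n p) := by
  have hR := hasAllEntryMoments_gramResolvent (n := n) (p := p) hε
  have hR' := hasAllEntryMoments_gramResolventDeriv hε H
  have hpow : HasAllEntryMoments (fun Z => mulResolventPowDeriv ε k (of Z) H)
      (gaussEnsemble n p) :=
    ((HasAllEntryMoments.const H).mul (hR.pow (k + 1))).add (hasAllEntryMoments_of.mul
      (.sum _ fun i => ((hR.pow (k - i)).mul hR').mul (hR.pow i)))
  have hscalar := ((HasAllMoments.const q).mul (hR.trace.pow (q - 1))).mul hR'.trace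
  exact (HasAllEntryMoments.smul hscalar (hasAllEntryMoments_of.mul (hR.pow (k + 1)))).add
    (.smul (hR.trace.pow q) hpow)

theorem integral_trace_pow_mul_trace_pow_succ_le (q k : ℕ) :
    ((n : ℝ) - (k + 1) * (p + 1) - 2 * q) *
        ∫ Z, (gramResolvent ε (of Z)).trace ^ q * (gramResolvent ε (of Z) ^ (k + 1)).trace
          ∂gaussEnsemble n p ≤
      ∫ Z, (gramResolvent ε (of Z)).trace ^ q * (gramResolvent ε (of Z) ^ k).trace
        ∂gaussEnsemble n p := by
  have hdiv := hasAllEntryMoments_resolventFieldDeriv (n := n) (p := p) hε q k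
  rw [← integral_const_mul]
  calc ∫ Z, ((n : ℝ) - (k + 1) * (p + 1) - 2 * q) *
          ((gramResolvent ε (of Z)).trace ^ q * (gramResolvent ε (of Z) ^ (k + 1)).trace)
          ∂gaussEnsemble n p
      ≤ ∫ Z, coordTrace (resolventFieldDeriv ε q k (of Z)) ∂gaussEnsemble n p := by
        refine integral_mono
          ((hasAllMoments_trace_pow_mul_trace_pow hε q (k + 1)).integrable.const_mul _)
          (integrable_finsetSum _ fun i _ => integrable_finsetSum _ fun j _ =>
            (hdiv _ i j).integrable) fun Z => ?_
        simpa only [Fintype.card_fin] using le_coordTrace_resolventFieldDeriv hε q k (of Z)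
    _ = ∫ Z, ((of Z)ᵀ * resolventField ε q k (of Z)).trace ∂gaussEnsemble n p :=
        (integral_trace_transpose_mul (hasDerivAt_resolventField hε q k)
          (hasAllEntryMoments_resolventField hε q k) hdiv).symm
    _ ≤ ∫ Z, (gramResolvent ε (of Z)).trace ^ q * (gramResolvent ε (of Z) ^ k).trace
          ∂gaussEnsemble n p := by
        refine integral_mono (hasAllEntryMoments_of.transpose.mul
            (hasAllEntryMoments_resolventField hε q k)).trace.integrable
          (hasAllMoments_trace_pow_mul_trace_pow hε q k).integrable fun Z => ?_
        simp only [resolventField, Matrix.mul_smul, trace_smul, smul_eq_mul, ← Matrix.mul_assoc]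
        exact mul_le_mul_of_nonneg_left (trace_transpose_mul_self_mul_gramResolvent_pow_le hε _ k)
          (pow_nonneg (trace_gramResolvent_nonneg hε.le _) q)

theorem integral_trace_gramResolvent_pow_le {q : ℕ} (hq : p + 2 * q ≤ n) :
    ∫ Z, (gramResolvent ε (of Z)).trace ^ q ∂gaussEnsemble n p ≤ p ^ q := by
  induction q with
  | zero => simp
  | succ q ih =>
    have hrec := integral_trace_pow_mul_trace_pow_succ_le (n := n) (p := p) hε q 0
    simp only [zero_add, pow_one, pow_zero, trace_one, Fintype.card_fin, ← pow_succ,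
      integral_mul_const, Nat.cast_zero, one_mul] at hrec
    have hgap : (1 : ℝ) ≤ n - (p + 1) - 2 * q := by
      have : ((p + 2 * (q + 1) : ℕ) : ℝ) ≤ n := by exact_mod_cast hq
      push_cast at this
      linarith
    have hnonneg : 0 ≤ ∫ Z, (gramResolvent ε (of Z)).trace ^ (q + 1) ∂gaussEnsemble n p :=
      integral_nonneg fun Z => pow_nonneg (trace_gramResolvent_nonneg hε.le _) _
    calc ∫ Z, (gramResolvent ε (of Z)).trace ^ (q + 1) ∂gaussEnsemble n p
        ≤ (n - (p + 1) - 2 * q) *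
            ∫ Z, (gramResolvent ε (of Z)).trace ^ (q + 1) ∂gaussEnsemble n p :=
          le_mul_of_one_le_left hnonneg hgap
      _ ≤ (∫ Z, (gramResolvent ε (of Z)).trace ^ q ∂gaussEnsemble n p) * p := hrec
      _ ≤ p ^ (q + 1) := by
        rw [pow_succ]
        gcongr
        exact ih (by omega)

end Resolvent

end GaussianEnsemble

section RegularizationLimit

theorem integrable_of_tendsto_of_integral_norm_le {α E : Type*} [MeasurableSpace α]
    [NormedAddCommGroup E] {μ : Measure α} {f : ℕ → α → E} {g : α → E} {C : ℝ}
    (hf : ∀ k, Integrable (f k) μ) (hC : ∀ k, ∫ x, ‖f k x‖ ∂μ ≤ C)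
    (hlim : ∀ᵐ x ∂μ, Tendsto (fun k => f k x) atTop (𝓝 (g x))) : Integrable g μ := by
  refine memLp_one_iff_integrable.1
    ⟨aestronglyMeasurable_of_tendsto_ae atTop (fun k => (hf k).1) hlim, ?_⟩
  have hbound (k : ℕ) : eLpNorm (f k) 1 μ ≤ ENNReal.ofReal C := by
    rw [eLpNorm_one_eq_lintegral_enorm, ← ofReal_integral_norm_eq_lintegral_enorm (hf k)]
    exact ENNReal.ofReal_le_ofReal (hC k)
  exact (Lp.eLpNorm_lim_le_liminf_eLpNorm (fun k => (hf k).1) g hlim).trans_lt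
    ((liminf_le_of_frequently_le' (.of_forall hbound)).trans_lt ENNReal.ofReal_lt_top)

variable {n p : ℕ}

-- On `{det ZᵀZ = 0}` the trace of the resolvent is at least `ε⁻¹`, while its mean is at most `p`.
theorem ae_det_transpose_mul_self_ne_zero (hn : p + 2 ≤ n) :
    ∀ᵐ Z ∂gaussEnsemble n p, ((of Z)ᵀ * of Z).det ≠ 0 := by
  set singular : Set (Fin n → Fin p → ℝ) := {Z | ((of Z)ᵀ * of Z).det = 0}
  have hmarkov {ε : ℝ} (hε : 0 < ε) : (gaussEnsemble n p).real singular ≤ ε * p := by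
    rw [← inv_mul_le_iff₀ hε]
    calc ε⁻¹ * (gaussEnsemble n p).real singular
        ≤ ε⁻¹ * (gaussEnsemble n p).real {Z | ε⁻¹ ≤ (gramResolvent ε (of Z)).trace} := by
          have hsubset : singular ⊆ {Z | ε⁻¹ ≤ (gramResolvent ε (of Z)).trace} :=
            fun Z hZ => inv_le_trace_gramResolvent hε hZ
          gcongr
          exact measure_ne_top _ _
      _ ≤ ∫ Z, (gramResolvent ε (of Z)).trace ∂gaussEnsemble n p :=
          mul_meas_ge_le_integral_of_nonneg
            (.of_forall fun Z => trace_gramResolvent_nonneg hε.le _)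
            (hasAllEntryMoments_gramResolvent hε).trace.integrable _
      _ ≤ p := by
          simpa only [pow_one] using integral_trace_gramResolvent_pow_le hε (q := 1) hn
  have hzero : (gaussEnsemble n p).real singular ≤ 0 := by
    have hlim : Tendsto (fun ε : ℝ => ε * p) (𝓝[>] 0) (𝓝 0) :=
      ((continuous_mul_const (p : ℝ)).tendsto' 0 0 (zero_mul _)).mono_left nhdsWithin_le_nhds
    exact ge_of_tendsto hlim (eventually_mem_nhdsWithin.mono fun ε hε => hmarkov hε)
  simpa only [ae_iff, not_not] using
    (measureReal_eq_zero_iff).1 (hzero.antisymm measureReal_nonneg)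

theorem integrable_trace_gramResolvent_zero_pow {q : ℕ} (hq : p + 2 * q ≤ n) :
    Integrable (fun Z => (gramResolvent 0 (of Z) ^ q).trace) (gaussEnsemble n p) := by
  rcases q with - | q
  · simp only [pow_zero, integrable_const]
  obtain ⟨ε, -, hε, hε_lim⟩ := exists_seq_strictAnti_tendsto (0 : ℝ)
  refine integrable_of_tendsto_of_integral_norm_le (C := (p : ℝ) ^ (q + 1))
    (fun k => ((hasAllEntryMoments_gramResolvent (hε k)).pow (q + 1)).trace.integrable)
    (fun k => ?_) ?_
  · simp only [Real.norm_of_nonneg (trace_gramResolvent_pow_nonneg (hε k).le _ _)]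
    refine (integral_mono ((hasAllEntryMoments_gramResolvent (hε k)).pow _).trace.integrable
      ((hasAllEntryMoments_gramResolvent (hε k)).trace.pow _).integrable fun Z => ?_).trans
      (integral_trace_gramResolvent_pow_le (hε k) hq)
    exact trace_pow_succ_le_trace_pow (posSemidef_gramResolvent (hε k).le _) q
  · filter_upwards [ae_det_transpose_mul_self_ne_zero (by omega)] with Z hZ
    exact (tendsto_trace_gramResolvent_pow hZ (q + 1)).comp hε_lim

theorem tendsto_integral_trace_gramResolvent_pow {q : ℕ} (hq : p + 2 * q ≤ n) :
    Tendsto (fun ε => ∫ Z, (gramResolvent ε (of Z) ^ q).trace ∂gaussEnsemble n p) (𝓝[>] 0)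
      (𝓝 (∫ Z, (gramResolvent 0 (of Z) ^ q).trace ∂gaussEnsemble n p)) := by
  rcases q with - | q
  · simp only [pow_zero, tendsto_const_nhds]
  refine tendsto_integral_filter_of_dominated_convergence _
    (eventually_mem_nhdsWithin.mono fun ε hε =>
      ((hasAllEntryMoments_gramResolvent hε).pow (q + 1)).trace.integrable.aestronglyMeasurable)
    (eventually_mem_nhdsWithin.mono fun ε (hε : 0 < ε) => ?_)
    (integrable_trace_gramResolvent_zero_pow hq) ?_
  · filter_upwards [ae_det_transpose_mul_self_ne_zero (by omega)] with Z hZ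
    rw [Real.norm_of_nonneg (trace_gramResolvent_pow_nonneg hε.le _ _)]
    exact trace_gramResolvent_pow_le hZ hε.le (q + 1)
  · filter_upwards [ae_det_transpose_mul_self_ne_zero (by omega)] with Z hZ
    exact (tendsto_trace_gramResolvent_pow hZ (q + 1)).mono_left nhdsWithin_le_nhds

theorem integral_trace_gramResolvent_zero_pow_succ_le {k : ℕ} (hk : p + 2 * (k + 1) ≤ n) :
    ((n : ℝ) - (k + 1) * (p + 1)) *
        ∫ Z, (gramResolvent 0 (of Z) ^ (k + 1)).trace ∂gaussEnsemble n p ≤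
      ∫ Z, (gramResolvent 0 (of Z) ^ k).trace ∂gaussEnsemble n p := by
  refine le_of_tendsto_of_tendsto
    ((tendsto_integral_trace_gramResolvent_pow hk).const_mul _)
    (tendsto_integral_trace_gramResolvent_pow (by omega))
    (eventually_mem_nhdsWithin.mono fun ε hε => ?_)
  simpa only [pow_zero, one_mul, Nat.cast_zero, mul_zero, sub_zero] using
    integral_trace_pow_mul_trace_pow_succ_le hε 0 k

end RegularizationLimit

theorem inv_smul_of_ne_zero {m K : Type*} [Fintype m] [DecidableEq m] [Field K] {c : K}
    (hc : c ≠ 0) (A : Matrix m m K) : (c • A)⁻¹ = c⁻¹ • A⁻¹ := by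
  by_cases hA : IsUnit A.det
  · exact A.inv_smul' (Units.mk0 c hc) hA
  · have hcA : ¬IsUnit (c • A).det := by
      rw [det_smul]
      exact fun h => hA (isUnit_of_mul_isUnit_right h)
    rw [nonsing_inv_apply_not_isUnit _ hA, nonsing_inv_apply_not_isUnit _ hcA, smul_zero]

theorem trace_inv_wishartOf_pow {n p : ℕ} (hn : n ≠ 0) (Z : Fin n → Fin p → ℝ) (k : ℕ) :
    ((wishartOf Z)⁻¹ ^ k).trace = n ^ k * (gramResolvent 0 (of Z) ^ k).trace := by
  rw [wishartOf, inv_smul_of_ne_zero (inv_ne_zero (Nat.cast_ne_zero.2 hn)), inv_inv, smul_pow,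
    trace_smul, smul_eq_mul, gramResolvent, zero_smul, add_zero]

theorem inverse_wishart_trace_recursion_general (n p s : ℕ) (hs : 1 ≤ s) (h : p + 2 * s ≤ n) :
    Integrable (fun Z : Fin n → Fin p → ℝ => Matrix.trace ((wishartOf Z)⁻¹ ^ s))
      (gaussEnsemble n p) ∧
    Integrable (fun Z : Fin n → Fin p → ℝ => Matrix.trace ((wishartOf Z)⁻¹ ^ (s - 1)))
      (gaussEnsemble n p) ∧
    (1 - ((p : ℝ) + 1) * s / n) *
        ∫ Z, Matrix.trace ((wishartOf Z)⁻¹ ^ s) ∂gaussEnsemble n p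
      ≤ ∫ Z, Matrix.trace ((wishartOf Z)⁻¹ ^ (s - 1)) ∂gaussEnsemble n p := by
  obtain ⟨k, rfl⟩ := Nat.exists_eq_add_of_le' hs
  have hn : n ≠ 0 := by omega
  simp only [trace_inv_wishartOf_pow hn, Nat.add_sub_cancel, integral_const_mul]
  refine ⟨(integrable_trace_gramResolvent_zero_pow h).const_mul _,
    (integrable_trace_gramResolvent_zero_pow (by omega)).const_mul _, ?_⟩
  refine le_of_eq_of_le ?_ (mul_le_mul_of_nonneg_left
    (integral_trace_gramResolvent_zero_pow_succ_le h) (pow_nonneg n.cast_nonneg k))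
  have hn' : (n : ℝ) ≠ 0 := Nat.cast_ne_zero.2 hn
  push_cast
  rw [pow_succ]
  field_simp

/-- (Stein recursion for inverse Wishart moments.)  For integers
`n, p, s ≥ 1` with `n ≥ p + 4s + 2`, the traces `tr(Y^{-s})` and `tr(Y^{-(s-1)})` are
integrable under `μ_{n,p}` and `(1 - (p+1)s/n) E[tr Y^{-s}] ≤ E[tr Y^{-(s-1)}]`. -/
theorem inverse_wishart_trace_recursion (n p s : ℕ) (hn : 1 ≤ n) (hp : 1 ≤ p) (hs : 1 ≤ s)
    (h : p + 4 * s + 2 ≤ n) :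
    Integrable (fun Z : Fin n → Fin p → ℝ => Matrix.trace ((wishartOf Z)⁻¹ ^ s))
      (gaussEnsemble n p) ∧
    Integrable (fun Z : Fin n → Fin p → ℝ => Matrix.trace ((wishartOf Z)⁻¹ ^ (s - 1)))
      (gaussEnsemble n p) ∧
    (1 - ((p : ℝ) + 1) * s / n) *
        ∫ Z, Matrix.trace ((wishartOf Z)⁻¹ ^ s) ∂gaussEnsemble n p
      ≤ ∫ Z, Matrix.trace ((wishartOf Z)⁻¹ ^ (s - 1)) ∂gaussEnsemble n p :=
  inverse_wishart_trace_recursion_general n p s hs (by omega)
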